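/- arXiv:2403.09335 — 2 statements merged into one kernel-verified Lean document; each statement's English description precedes it below -/
import Mathlib

section
/- Let N ≥ 1 and m ≥ 1 be integers and let f : ℝ → ℝ be m times continuously differentiable on [0,N]. Then the forward Euler–Maclaurin formula holds: Σ_{k=1}^{N} f(k) = ∫_0^N f(s) ds + Σ_{l=1}^{m} ((bernoulli' l)/l!)·(f^{(l−1)}(N) − f^{(l−1)}(0)) + R_m, where the remainder is R_m = ((−1)^{m+1}/m!)·∫_0^N f^{(m)}(s)·P_m(s − ⌊s⌋) ds. -/
open scoped Nat
open MeasureTheory intervalIntegral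

/-- The `l`-th Bernoulli polynomial `P_l(x) = ∑_{j=0}^l C(l,j) · B_j · x^{l-j}`,
with `bernoulli 1 = -1/2`. -/
noncomputable def bernoulliPoly (l : ℕ) (x : ℝ) : ℝ :=
  ∑ j ∈ Finset.range (l + 1), (l.choose j : ℝ) * ((bernoulli j : ℚ) : ℝ) * x ^ (l - j)

/-!
Let `g 0, g 1, …` be functions each of which has the next one as its derivative. On a unit interval
`[c, c + 1]`, integrating `B_{l+1}(s - c) • g (l + 1) s` by parts leaves the same integral with `l`
in place of `l + 1`, because `B_{l+1}' = (l + 1) B_l`. The boundary values `B_{l+1}(0)` and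
`B_{l+1}(1)` agree for `l ≥ 1`, so the boundary term is a multiple of an increment of `g l`; for
`l = 0` they are `-1/2` and `1/2`, and this is where the value `g 0 (c + 1)` appears. Summing over
consecutive unit intervals makes the increments telescope.
-/

theorem bernoulliPoly_eq_bernoulliFun : bernoulliPoly = bernoulliFun := by
  ext l x
  simp [bernoulliPoly, bernoulliFun, Polynomial.bernoulli, Polynomial.map_sum,
    Polynomial.eval_finsetSum, mul_comm]

theorem Icc_add_natCast_subset {N k : ℕ} (hk : k < N) (a : ℝ) :
    Set.Icc (a + k) (a + k + 1) ⊆ Set.Icc a (a + N) := by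
  have : (k : ℝ) + 1 ≤ N := by exact_mod_cast hk
  exact Set.Icc_subset_Icc (by simp) (by linarith)

theorem fract_sub_eq_of_mem_Ico {a s : ℝ} {k : ℕ} (hs : s ∈ Set.Ico (a + k) (a + k + 1)) :
    Int.fract (s - a) = s - (a + k) :=
  Int.fract_eq_iff.2 ⟨by linarith [hs.1], by linarith [hs.2], k, by push_cast; ring⟩

section EulerMaclaurin

variable {E : Type*} [NormedAddCommGroup E]

theorem intervalIntegrable_add_natCast_add_one {N k : ℕ} {a : ℝ} {g : ℝ → E}
    (hg : IntervalIntegrable g volume a (a + N)) (hk : k < N) :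
    IntervalIntegrable g volume (a + k) (a + k + 1) := by
  refine hg.mono_set ?_
  rw [Set.uIcc_of_le (by simp), Set.uIcc_of_le (by simp)]
  exact Icc_add_natCast_subset hk a

variable [NormedSpace ℝ E]

theorem hasDerivAt_iteratedDerivWithin_Icc {f : ℝ → E} {a b s : ℝ} {m l : ℕ}
    (hf : ContDiffOn ℝ m f (Set.Icc a b)) (hl : l < m) (hs : s ∈ Set.Ioo a b) :
    HasDerivAt (iteratedDerivWithin l f (Set.Icc a b))
      (iteratedDerivWithin (l + 1) f (Set.Icc a b) s) s := by
  have hdiff := hf.differentiableOn_iteratedDerivWithin (m := l) (by exact_mod_cast hl)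
    (uniqueDiffOn_Icc (hs.1.trans hs.2)) s (Set.Ioo_subset_Icc_self hs)
  rw [iteratedDerivWithin_succ]
  exact hdiff.hasDerivWithinAt.hasDerivAt (Icc_mem_nhds hs.1 hs.2)

theorem integral_comp_fract_sub_smul_eq_sum {N : ℕ} {a : ℝ} {p : ℝ → ℝ} {g : ℝ → E}
    (hp : Continuous p) (hg : IntervalIntegrable g volume a (a + N)) :
    ∫ s in a..a + N, p (Int.fract (s - a)) • g s =
      ∑ k ∈ Finset.range N, ∫ s in (a + k)..(a + k + 1), p (s - (a + k)) • g s := by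
  -- The two integrands may differ at `a + k + 1`, where `Int.fract (s - a)` jumps to `0`.
  have hcongr (k : ℕ) : Set.EqOn (fun s => p (s - (a + k)) • g s)
      (fun s => p (Int.fract (s - a)) • g s) (Set.uIoo (a + k) (a + k + 1)) := fun s hs => by
    rw [Set.uIoo_of_le (by simp)] at hs
    simp only [fract_sub_eq_of_mem_Ico (Set.Ioo_subset_Ico_self hs)]
  have hint (k : ℕ) (hk : k < N) : IntervalIntegrable (fun s => p (Int.fract (s - a)) • g s)
      volume (a + k) (a + k + 1) :=
    IntervalIntegrable.congr_uIoo
      ((intervalIntegrable_add_natCast_add_one hg hk).continuousOn_smul (by fun_prop)) (hcongr k)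
  simp only [integral_congr_uIoo (hcongr _)]
  simpa [add_assoc] using (sum_integral_adjacent_intervals (a := fun k : ℕ => a + k)
    (by simpa [add_assoc] using hint)).symm

variable [CompleteSpace E]

theorem integral_bernoulliFun_succ_smul_deriv (l : ℕ) {c : ℝ} {g g' : ℝ → E}
    (hg : ContinuousOn g (Set.Icc c (c + 1)))
    (hderiv : ∀ s ∈ Set.Ioo c (c + 1), HasDerivAt g (g' s) s)
    (hg' : IntervalIntegrable g' volume c (c + 1)) :
    ∫ s in c..c + 1, bernoulliFun (l + 1) (s - c) • g' s =
      bernoulliFun (l + 1) 1 • g (c + 1) - bernoulliFun (l + 1) 0 • g c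
        - ((l : ℝ) + 1) • ∫ s in c..c + 1, bernoulliFun l (s - c) • g s := by
  have hB (s : ℝ) : HasDerivAt (fun s => bernoulliFun (l + 1) (s - c))
      (((l : ℝ) + 1) * bernoulliFun l (s - c)) s := by
    simpa using (hasDerivAt_bernoulliFun (l + 1) (s - c)).comp_sub_const s c
  rw [← Set.uIcc_of_le (by simp)] at hg
  rw [integral_smul_deriv_eq_deriv_smul_of_hasDerivAt (by fun_prop) hg (fun s _ => hB s)
    (by simpa using hderiv) (Continuous.intervalIntegrable (by fun_prop) _ _) hg']
  simp only [mul_smul, intervalIntegral.integral_smul, add_sub_cancel_left, sub_self]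

theorem euler_maclaurin_unitInterval {g : ℕ → ℝ → E} {c : ℝ} {m : ℕ} (hm : 1 ≤ m)
    (hcont : ∀ l < m, ContinuousOn (g l) (Set.Icc c (c + 1)))
    (hderiv : ∀ l < m, ∀ s ∈ Set.Ioo c (c + 1), HasDerivAt (g l) (g (l + 1) s) s)
    (hint : IntervalIntegrable (g m) volume c (c + 1)) :
    g 0 (c + 1) =
      (∫ s in c..c + 1, g 0 s)
      + ∑ l ∈ Finset.Icc 1 m, ((bernoulli' l : ℝ) / l !) • (g (l - 1) (c + 1) - g (l - 1) c)
      + ((-1 : ℝ) ^ (m + 1) / m !) • ∫ s in c..c + 1, bernoulliFun m (s - c) • g m s := by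
  induction m, hm using Nat.le_induction with
  | base =>
    have hparts : ∫ s in c..c + 1, bernoulliFun 1 (s - c) • g 1 s =
        (1 / 2 : ℝ) • (g 0 (c + 1) + g 0 c) - ∫ s in c..c + 1, g 0 s := by
      rw [integral_bernoulliFun_succ_smul_deriv 0 (hcont 0 one_pos) (hderiv 0 one_pos) hint]
      norm_num
    rw [Finset.Icc_self, Finset.sum_singleton, bernoulli'_one, hparts, Nat.factorial_one,
      Nat.sub_self]
    push_cast
    module
  | succ n hn ih =>
    have hparts := integral_bernoulliFun_succ_smul_deriv n
      (hcont n n.lt_succ_self) (hderiv n n.lt_succ_self) hint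
    rw [bernoulliFun_endpoints_eq_of_ne_one (by lia), bernoulliFun_eval_zero] at hparts
    have hint_n : IntervalIntegrable (g n) volume c (c + 1) :=
      (hcont n n.lt_succ_self).intervalIntegrable_of_Icc (by simp)
    rw [ih (fun l hl => hcont l (by lia)) (fun l hl => hderiv l (by lia)) hint_n,
      Finset.sum_Icc_succ_top (by lia), hparts, Nat.add_sub_cancel, bernoulli'_eq_bernoulli,
      Nat.factorial_succ]
    push_cast
    match_scalars <;> field_simp <;> ring

theorem forward_euler_maclaurin_general {g : ℕ → ℝ → E} {a : ℝ} {N m : ℕ} (hm : 1 ≤ m)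
    (hcont : ∀ l < m, ContinuousOn (g l) (Set.Icc a (a + N)))
    (hderiv : ∀ l < m, ∀ s ∈ Set.Ioo a (a + N), HasDerivAt (g l) (g (l + 1) s) s)
    (hint : IntervalIntegrable (g m) volume a (a + N)) :
    ∑ k ∈ Finset.Icc 1 N, g 0 (a + k) =
      (∫ s in a..a + N, g 0 s)
      + ∑ l ∈ Finset.Icc 1 m, ((bernoulli' l : ℝ) / l !) • (g (l - 1) (a + N) - g (l - 1) a)
      + ((-1 : ℝ) ^ (m + 1) / m !) •
          ∫ s in a..a + N, bernoulliFun m (Int.fract (s - a)) • g m s := by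
  have hunit (k : ℕ) (hk : k < N) :=
    have hsub := Icc_add_natCast_subset hk a
    euler_maclaurin_unitInterval hm (fun l hl => (hcont l hl).mono hsub)
      (fun l hl s hs => hderiv l hl s (by simpa using interior_mono hsub (by simpa using hs)))
      (intervalIntegrable_add_natCast_add_one hint hk)
  have hintegral : ∫ s in a..a + N, g 0 s =
      ∑ k ∈ Finset.range N, ∫ s in (a + k)..(a + k + 1), g 0 s := by
    simpa using integral_comp_fract_sub_smul_eq_sum (p := fun _ => 1) continuous_const
      ((hcont 0 hm).intervalIntegrable_of_Icc (by simp))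
  have htelescope (h : ℝ → E) :
      ∑ k ∈ Finset.range N, (h (a + k + 1) - h (a + k)) = h (a + N) - h a := by
    simpa [add_assoc] using Finset.sum_range_sub (fun k : ℕ => h (a + k)) N
  have hreindex : ∑ k ∈ Finset.Icc 1 N, g 0 (a + k) = ∑ k ∈ Finset.range N, g 0 (a + k + 1) := by
    simpa [add_assoc, ← Finset.Ico_add_one_right_eq_Icc] using
      (Finset.sum_Ico_add' (fun k : ℕ => g 0 (a + k)) 0 N 1).symm
  rw [hreindex, Finset.sum_congr rfl fun k hk => hunit k (Finset.mem_range.1 hk),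
    Finset.sum_add_distrib, Finset.sum_add_distrib, ← hintegral, Finset.sum_comm,
    ← Finset.smul_sum, ← integral_comp_fract_sub_smul_eq_sum (continuous_bernoulliFun m) hint]
  simp only [← Finset.smul_sum, htelescope]

end EulerMaclaurin

/-- Forward Euler–Maclaurin formula with explicit integral remainder. -/
theorem forward_euler_maclaurin (N m : ℕ) (hN : 1 ≤ N) (hm : 1 ≤ m) (f : ℝ → ℝ)
    (hf : ContDiffOn ℝ m f (Set.Icc 0 (N : ℝ))) :
    ∑ k ∈ Finset.Icc 1 N, f (k : ℝ) =
      (∫ s in (0:ℝ)..(N:ℝ), f s)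
      + ∑ l ∈ Finset.Icc 1 m,
          (((bernoulli' l : ℚ) : ℝ) / (l ! : ℝ)) *
            (iteratedDerivWithin (l - 1) f (Set.Icc 0 (N : ℝ)) (N : ℝ)
              - iteratedDerivWithin (l - 1) f (Set.Icc 0 (N : ℝ)) 0)
      + ((-1 : ℝ) ^ (m + 1) / (m ! : ℝ)) *
          ∫ s in (0:ℝ)..(N:ℝ),
            iteratedDerivWithin m f (Set.Icc 0 (N : ℝ)) s * bernoulliPoly m (s - ⌊s⌋) := by
  have hcont (l : ℕ) (hl : l ≤ m) := hf.continuousOn_iteratedDerivWithin (m := l)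
    (by exact_mod_cast hl) (uniqueDiffOn_Icc (by exact_mod_cast hN))
  simpa [bernoulliPoly_eq_bernoulliFun, mul_comm] using forward_euler_maclaurin_general (a := 0)
    (g := fun l => iteratedDerivWithin l f (Set.Icc 0 (N : ℝ))) hm
    (by simpa using fun l hl => hcont l hl.le)
    (by simpa using fun l hl s => hasDerivAt_iteratedDerivWithin_Icc hf hl)
    (by simpa using (hcont m le_rfl).intervalIntegrable_of_Icc (by simp))
end

section
/- Let N ≥ 1 be an integer and X : [0,N] → ℝ^d a continuously differentiable path, extended to ℝ by its constant boundary values. For every integer l ≥ 2 and every word (j_1,…,j_l) with letters in {1,…,d}, the signature satisfies the recursion ⟨S_{0,N}(X),(j_1,…,j_l)⟩ = Σ_{k=0}^{N−1} ⟨S_{0,k}(X),(j_1,…,j_{l−1})⟩·(X^{j_l}_{k+1} − X^{j_l}_k) + Σ_{p=2}^{l} (−1)^{p+1}·⟨S_{0,N}(X),(j_1,…,j_{l−p})⟩·⟨Z_N,(j_{l−p+1},…,j_l)⟩, where the term with p = l uses the empty word, ⟨S_{0,N}(X),∅⟩ = 1. -/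
open scoped Nat
open MeasureTheory

/-- The open simplex `{(t_1,…,t_n) : s < t_1 < ⋯ < t_n < t}` in `ℝ^n`. -/
def simplexSet (n : ℕ) (s t : ℝ) : Set (Fin n → ℝ) :=
  {u | (∀ i, s < u i ∧ u i < t) ∧ ∀ i j : Fin n, i < j → u i < u j}

/-- Signature coefficient `⟨S_{s,t}(X), (w 0, …, w (n-1))⟩` of the path `X` over `[s,t]`,
for the word given by the first `n` letters of `w`; equal to `1` for the empty word. -/
noncomputable def sigCoeff {d : ℕ} (X : ℝ → Fin d → ℝ) (s t : ℝ) (n : ℕ) (w : ℕ → Fin d) : ℝ :=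
  if n = 0 then 1 else
    ∫ u in simplexSet n s t, ∏ k : Fin n, deriv (fun r => X r (w k)) (u k)

/-!
Write `S_m(t)` for the signature over `[0,t]` of the first `m` letters, so that
`dS_{m+1} = S_m dX^{w_m}`. Integrating `S_{l-1}` against `dX^{w_{l-1}}` by parts on each interval
`[k,k+1]`, with the primitive of `dX` normalised to vanish at `k+1`, produces the left-point
Riemann–Stieltjes sum and the remainder `-∫ Z_1 dS_{l-1}`. Each remainder satisfies
`∫ Z_p dS_{m+1} = ∫ S_m dZ_{p+1} = S_m(N) Z_{p+1}(N) - ∫ Z_{p+1} dS_m`, and iterating down to the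
constant `S_0` gives the alternating sum.
-/

open Set intervalIntegral
open scoped Interval

section AbsolutelyContinuous

variable {a b : ℝ}

lemma absolutelyContinuousOnInterval_of_eqOn {E : Type*} [PseudoMetricSpace E] {f g : ℝ → E}
    (hf : AbsolutelyContinuousOnInterval f a b) (hfg : EqOn f g (uIcc a b)) :
    AbsolutelyContinuousOnInterval g a b := by
  refine Filter.Tendsto.congr' ?_ hf
  filter_upwards [Filter.mem_inf_of_right (Filter.mem_principal_self _)] with I hI
  exact Finset.sum_congr rfl fun i hi => by rw [hfg (hI.1 i hi).1, hfg (hI.1 i hi).2]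

lemma absolutelyContinuousOnInterval_const {E : Type*} [PseudoMetricSpace E] (c : E) :
    AbsolutelyContinuousOnInterval (fun _ => c) a b := by
  simpa [AbsolutelyContinuousOnInterval] using tendsto_const_nhds

variable {f F : ℝ → ℝ}

lemma absolutelyContinuousOnInterval_of_eq_integral (hf : IntervalIntegrable f volume a b)
    (hF : ∀ t ∈ uIcc a b, F t = ∫ s in a..t, f s) : AbsolutelyContinuousOnInterval F a b :=
  absolutelyContinuousOnInterval_of_eqOn
    (hf.absolutelyContinuousOnInterval_intervalIntegral left_mem_uIcc) fun t ht => (hF t ht).symm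

lemma deriv_ae_eq_of_eq_integral (hf : IntervalIntegrable f volume a b)
    (hF : ∀ t ∈ uIcc a b, F t = ∫ s in a..t, f s) :
    deriv F =ᵐ[volume.restrict (Ι a b)] f := by
  rw [Filter.EventuallyEq, uIoc, ← restrict_Ioo_eq_restrict_Ioc,
    ae_restrict_iff' measurableSet_Ioo]
  filter_upwards [hf.ae_hasDerivAt_integral] with t hderiv ht
  have hF_near : F =ᶠ[nhds t] fun x => ∫ s in a..x, f s := by
    filter_upwards [Icc_mem_nhds ht.1 ht.2] with x hx using hF x hx
  rw [hF_near.deriv_eq]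
  exact (hderiv (Ioo_subset_Icc_self ht) a left_mem_uIcc).deriv

end AbsolutelyContinuous

section Simplex

variable {n : ℕ} {s t : ℝ}

lemma measurableSet_simplexSet (n : ℕ) (s t : ℝ) : MeasurableSet (simplexSet n s t) := by
  simp only [simplexSet, measurableSet_setOfPred]
  fun_prop

lemma simplexSet_subset_pi_Ioc (n : ℕ) (s t : ℝ) :
    simplexSet n s t ⊆ univ.pi fun _ => Ioc s t :=
  fun _ hu i _ => ⟨(hu.1 i).1, (hu.1 i).2.le⟩

lemma simplexSet_zero (s t : ℝ) : simplexSet 0 s t = univ := by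
  ext
  simp [simplexSet]

lemma snoc_mem_simplexSet_iff {v : Fin n → ℝ} {r : ℝ} :
    (Fin.snoc v r : Fin (n + 1) → ℝ) ∈ simplexSet (n + 1) s t ↔
      r ∈ Ioo s t ∧ v ∈ simplexSet n s r := by
  simp only [simplexSet, mem_ofPred_eq, Fin.forall_fin_succ', mem_Ioo, Fin.snoc_castSucc,
    Fin.snoc_last, Fin.castSucc_lt_castSucc_iff, Fin.castSucc_lt_last, lt_irrefl,
    (Fin.castSucc_lt_last _).not_gt]
  grind

lemma integral_fin_succ_eq_integral_snoc {E : Type*} [NormedAddCommGroup E] [NormedSpace ℝ E]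
    {f : (Fin (n + 1) → ℝ) → E} (hf : Integrable f) :
    ∫ u, f u = ∫ r, ∫ v : Fin n → ℝ, f (Fin.snoc v r) := by
  let e := (MeasurableEquiv.piFinSuccAbove (fun _ : Fin (n + 1) => ℝ) (Fin.last n)).symm
  have he : MeasurePreserving e := (volume_preserving_piFinSuccAbove _ _).symm _
  have he_apply (r : ℝ) (v : Fin n → ℝ) : e (r, v) = Fin.snoc v r :=
    Fin.insertNth_last' r v
  have hfe : Integrable (fun q => f (e q)) := (he.integrable_comp_emb e.measurableEmbedding).2 hf
  rw [← he.integral_comp', Measure.volume_eq_prod, integral_prod _ hfe]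
  simp only [he_apply]

variable {𝕜 : Type*} [RCLike 𝕜]

lemma integrableOn_simplexSet_prod {f : Fin n → ℝ → 𝕜}
    (hf : ∀ k, IntegrableOn (f k) (Ioc s t)) :
    IntegrableOn (fun u => ∏ k, f k (u k)) (simplexSet n s t) := by
  refine IntegrableOn.mono_set ?_ (simplexSet_subset_pi_Ioc n s t)
  rw [IntegrableOn, volume_pi, Measure.restrict_pi_pi]
  exact Integrable.fintype_prod hf

lemma setIntegral_simplexSet_succ (hst : s ≤ t) {f : Fin (n + 1) → ℝ → 𝕜}
    (hf : ∀ k, IntegrableOn (f k) (Ioc s t)) :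
    ∫ u in simplexSet (n + 1) s t, ∏ k, f k (u k) =
      ∫ r in s..t, (∫ v in simplexSet n s r, ∏ k, f k.castSucc (v k)) * f (Fin.last n) r := by
  have indicator_snoc (r : ℝ) (v : Fin n → ℝ) :
      (simplexSet (n + 1) s t).indicator (fun u => ∏ k, f k (u k)) (Fin.snoc v r) =
        (Ioo s t).indicator (fun r => (simplexSet n s r).indicator
          (fun v => ∏ k, f k.castSucc (v k)) v * f (Fin.last n) r) r := by
    classical
    simp only [indicator_apply, snoc_mem_simplexSet_iff, Fin.prod_univ_castSucc,
      Fin.snoc_castSucc, Fin.snoc_last]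
    split_ifs <;> simp_all
  rw [← MeasureTheory.integral_indicator (measurableSet_simplexSet _ _ _),
    integral_fin_succ_eq_integral_snoc
      ((integrableOn_simplexSet_prod hf).integrable_indicator (measurableSet_simplexSet _ _ _)),
    integral_of_le hst, integral_Ioc_eq_integral_Ioo,
    ← MeasureTheory.integral_indicator measurableSet_Ioo]
  congr 1 with r
  simp only [indicator_snoc]
  by_cases hr : r ∈ Ioo s t
  · simp only [indicator_of_mem hr, MeasureTheory.integral_mul_const,
      MeasureTheory.integral_indicator (measurableSet_simplexSet n s r)]
  · simp only [indicator_of_notMem hr, integral_zero]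

end Simplex

section Signature

variable {d : ℕ} {X : ℝ → Fin d → ℝ} {s t : ℝ}

lemma sigCoeff_zero (X : ℝ → Fin d → ℝ) (s t : ℝ) (w : ℕ → Fin d) : sigCoeff X s t 0 w = 1 :=
  if_pos rfl

lemma sigCoeff_eq_setIntegral (X : ℝ → Fin d → ℝ) (s t : ℝ) (n : ℕ) (w : ℕ → Fin d) :
    sigCoeff X s t n w =
      ∫ u in simplexSet n s t, ∏ k : Fin n, deriv (fun r => X r (w k)) (u k) := by
  cases n with
  | zero => simp [sigCoeff_zero, simplexSet_zero, measureReal_def, volume_pi]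
  | succ n => exact if_neg n.succ_ne_zero

lemma sigCoeff_succ (hX : ∀ j, IntervalIntegrable (deriv fun r => X r j) volume s t)
    (hst : s ≤ t) (n : ℕ) (w : ℕ → Fin d) :
    sigCoeff X s t (n + 1) w =
      ∫ r in s..t, sigCoeff X s r n w * deriv (fun r => X r (w n)) r := by
  simp only [sigCoeff_eq_setIntegral]
  exact setIntegral_simplexSet_succ (f := fun k => deriv fun r => X r (w k)) hst
    fun k => (hX (w k)).1

lemma sigCoeff_succ_of_mem (hX : ∀ j, AbsolutelyContinuousOnInterval (fun r => X r j) s t)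
    (hst : s ≤ t) (n : ℕ) (w : ℕ → Fin d) {r : ℝ} (hr : r ∈ uIcc s t) :
    sigCoeff X s r (n + 1) w =
      ∫ q in s..r, sigCoeff X s q n w * deriv (fun r => X r (w n)) q := by
  have hrst : uIcc s r ⊆ uIcc s t := uIcc_subset_uIcc_left hr
  rw [uIcc_of_le hst] at hr
  exact sigCoeff_succ (fun j => ((hX j).mono hrst).intervalIntegrable_deriv) hr.1 n w

lemma absolutelyContinuousOnInterval_sigCoeff
    (hX : ∀ j, AbsolutelyContinuousOnInterval (fun r => X r j) s t) (hst : s ≤ t) (n : ℕ)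
    (w : ℕ → Fin d) : AbsolutelyContinuousOnInterval (fun r => sigCoeff X s r n w) s t := by
  induction n with
  | zero => simpa only [sigCoeff_zero] using absolutelyContinuousOnInterval_const 1
  | succ n ih =>
    exact absolutelyContinuousOnInterval_of_eq_integral
      ((hX (w n)).intervalIntegrable_deriv.continuousOn_mul ih.continuousOn)
      fun r hr => sigCoeff_succ_of_mem hX hst n w hr

lemma deriv_sigCoeff_succ_ae_eq
    (hX : ∀ j, AbsolutelyContinuousOnInterval (fun r => X r j) s t) (hst : s ≤ t) (n : ℕ)
    (w : ℕ → Fin d) :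
    deriv (fun r => sigCoeff X s r (n + 1) w) =ᵐ[volume.restrict (Ι s t)]
      fun r => sigCoeff X s r n w * deriv (fun r => X r (w n)) r :=
  deriv_ae_eq_of_eq_integral
    ((hX (w n)).intervalIntegrable_deriv.continuousOn_mul
      (absolutelyContinuousOnInterval_sigCoeff hX hst n w).continuousOn)
    fun _ hr => sigCoeff_succ_of_mem hX hst n w hr

end Signature

section Sawtooth

/-- The backward sawtooth `t ↦ Y_t - Y_{⌊t⌋+1}` of a real path `Y`: the displacement of `Y` from
the next integer time strictly after `t`. -/
noncomputable def backwardSawtooth (Y : ℝ → ℝ) (t : ℝ) : ℝ :=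
  Y t - Y (⌊t⌋ + 1)

lemma backwardSawtooth_eqOn_uIoo (Y : ℝ → ℝ) (k : ℕ) :
    EqOn (backwardSawtooth Y) (fun t => Y t - Y (k + 1 : ℕ)) (uIoo (k : ℝ) (k + 1 : ℕ)) := by
  intro t ht
  rw [uIoo_of_le (by simp)] at ht
  have hfloor : ⌊t⌋ = (k : ℤ) := Int.floor_eq_iff.2 ⟨by exact_mod_cast ht.1.le,
    by exact_mod_cast ht.2⟩
  simp [backwardSawtooth, hfloor]

lemma uIcc_natCast_succ_subset {k N : ℕ} (hk : k < N) :
    uIcc (k : ℝ) (k + 1 : ℕ) ⊆ uIcc 0 (N : ℝ) := by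
  refine uIcc_subset_uIcc ?_ ?_ <;> rw [uIcc_of_le N.cast_nonneg]
  · exact ⟨k.cast_nonneg, by exact_mod_cast hk.le⟩
  · exact ⟨(k + 1).cast_nonneg, by exact_mod_cast hk⟩

lemma intervalIntegrable_mul_backwardSawtooth {N : ℕ} {f Y : ℝ → ℝ}
    (hf : IntervalIntegrable f volume 0 N) (hY : ContinuousOn Y (uIcc 0 N)) :
    IntervalIntegrable (fun t => f t * backwardSawtooth Y t) volume 0 N := by
  have hpiece : ∀ k < N, IntervalIntegrable (fun t => f t * backwardSawtooth Y t) volume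
      (k : ℝ) (k + 1 : ℕ) := by
    intro k hk
    have hsub := uIcc_natCast_succ_subset hk
    refine ((hf.mono_set hsub).mul_continuousOn
      ((hY.mono hsub).fun_sub (continuousOn_const (c := Y (k + 1 : ℕ))))).congr_uIoo fun t ht => ?_
    simp only [backwardSawtooth_eqOn_uIoo Y k ht]
  simpa using IntervalIntegrable.trans_iterate (a := fun k : ℕ => (k : ℝ)) hpiece

lemma integral_mul_deriv_eq_sum_sub_integral_backwardSawtooth {N : ℕ} {G Y : ℝ → ℝ}
    (hG : AbsolutelyContinuousOnInterval G 0 N) (hY : AbsolutelyContinuousOnInterval Y 0 N) :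
    ∫ t in (0 : ℝ)..N, G t * deriv Y t =
      ∑ k ∈ Finset.range N, G k * (Y (k + 1) - Y k) -
        ∫ t in (0 : ℝ)..N, deriv G t * backwardSawtooth Y t := by
  have hGY : IntervalIntegrable (fun t => G t * deriv Y t) volume 0 N :=
    hY.intervalIntegrable_deriv.continuousOn_mul hG.continuousOn
  have hGS := intervalIntegrable_mul_backwardSawtooth hG.intervalIntegrable_deriv hY.continuousOn
  have hpiece : ∀ k < N, ∫ t in (k : ℝ)..(k + 1 : ℕ), G t * deriv Y t =
      G k * (Y (k + 1) - Y k) -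
        ∫ t in (k : ℝ)..(k + 1 : ℕ), deriv G t * backwardSawtooth Y t := by
    intro k hk
    have hsub := uIcc_natCast_succ_subset hk
    have hparts := (hG.mono hsub).integral_mul_deriv_eq_deriv_mul
      ((hY.mono hsub).fun_sub (absolutelyContinuousOnInterval_const (Y (k + 1 : ℕ))))
    simp only [deriv_sub_const] at hparts
    rw [hparts, integral_congr_uIoo fun t ht =>
      congrArg (deriv G t * ·) (backwardSawtooth_eqOn_uIoo Y k ht)]
    push_cast
    ring
  have hsum (f : ℝ → ℝ) (hf : IntervalIntegrable f volume 0 N) :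
      ∑ k ∈ Finset.range N, ∫ t in (k : ℝ)..(k + 1 : ℕ), f t = ∫ t in (0 : ℝ)..N, f t := by
    simpa using sum_integral_adjacent_intervals (a := fun k : ℕ => (k : ℝ))
      fun k hk => hf.mono_set (uIcc_natCast_succ_subset hk)
  rw [← hsum _ hGY, ← hsum _ hGS, ← Finset.sum_sub_distrib]
  exact Finset.sum_congr rfl fun k hk => hpiece k (Finset.mem_range.1 hk)

end Sawtooth

/-- `Z n w t` is the backward sawtooth signature coefficient `⟨Z_t, (w 0, …, w (n-1))⟩` of `X` with
unit initial datum, for `n ≥ 1` and `t` in `[0,N]`. Words of length one are not constrained at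
`t = N`, where the sawtooth would read `X` outside `[0,N]`. -/
structure IsSawtoothSignature {d : ℕ} (X : ℝ → Fin d → ℝ) (N : ℕ)
    (Z : ℕ → (ℕ → Fin d) → ℝ → ℝ) : Prop where
  one : ∀ w, ∀ t ∈ Ico 0 (N : ℝ), Z 1 w t = backwardSawtooth (fun r => X r (w 0)) t
  succ : ∀ n ≥ 1, ∀ w, ∀ t ∈ Icc 0 (N : ℝ),
    Z (n + 1) w t = ∫ s in (0 : ℝ)..t, deriv (fun r => X r (w 0)) s * Z n (fun i => w (i + 1)) s

namespace IsSawtoothSignature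

variable {d N n : ℕ} {X : ℝ → Fin d → ℝ} {Z : ℕ → (ℕ → Fin d) → ℝ → ℝ}

lemma succ_apply_zero (hZ : IsSawtoothSignature X N Z) (hn : 1 ≤ n) (w : ℕ → Fin d) :
    Z (n + 1) w 0 = 0 := by
  rw [hZ.succ n hn w 0 ⟨le_rfl, N.cast_nonneg⟩, integral_same]

lemma integral_mul_one (hZ : IsSawtoothSignature X N Z) (f : ℝ → ℝ) (w : ℕ → Fin d) :
    ∫ t in (0 : ℝ)..N, f t * Z 1 w t =
      ∫ t in (0 : ℝ)..N, f t * backwardSawtooth (fun r => X r (w 0)) t :=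
  integral_congr_Ioo_of_le N.cast_nonneg fun t ht =>
    congrArg (f t * ·) (hZ.one w t (Ioo_subset_Ico_self ht))

lemma absolutelyContinuousOnInterval_succ_of_intervalIntegrable (hZ : IsSawtoothSignature X N Z)
    (hn : 1 ≤ n) {w : ℕ → Fin d}
    (hint : IntervalIntegrable
      (fun t => deriv (fun r => X r (w 0)) t * Z n (fun i => w (i + 1)) t) volume 0 N) :
    AbsolutelyContinuousOnInterval (Z (n + 1) w) 0 N :=
  absolutelyContinuousOnInterval_of_eq_integral hint
    (by simpa only [uIcc_of_le N.cast_nonneg] using hZ.succ n hn w)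

lemma intervalIntegrable_mul (hZ : IsSawtoothSignature X N Z)
    (hX : ∀ j, AbsolutelyContinuousOnInterval (fun r => X r j) 0 N) (hn : 1 ≤ n)
    {f : ℝ → ℝ} (hf : IntervalIntegrable f volume 0 N) (w : ℕ → Fin d) :
    IntervalIntegrable (fun t => f t * Z n w t) volume 0 N := by
  induction n, hn using Nat.le_induction generalizing f w with
  | base =>
    refine (intervalIntegrable_mul_backwardSawtooth hf (hX (w 0)).continuousOn).congr_uIoo
      fun t ht => ?_
    rw [uIoo_of_le N.cast_nonneg] at ht
    simp only [hZ.one w t (Ioo_subset_Ico_self ht)]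
  | succ n hn ih =>
    exact hf.mul_continuousOn (hZ.absolutelyContinuousOnInterval_succ_of_intervalIntegrable hn
      (ih (hX (w 0)).intervalIntegrable_deriv _)).continuousOn

lemma absolutelyContinuousOnInterval_succ (hZ : IsSawtoothSignature X N Z)
    (hX : ∀ j, AbsolutelyContinuousOnInterval (fun r => X r j) 0 N) (hn : 1 ≤ n)
    (w : ℕ → Fin d) : AbsolutelyContinuousOnInterval (Z (n + 1) w) 0 N :=
  hZ.absolutelyContinuousOnInterval_succ_of_intervalIntegrable hn
    (hZ.intervalIntegrable_mul hX hn (hX (w 0)).intervalIntegrable_deriv _)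

lemma deriv_succ_ae_eq (hZ : IsSawtoothSignature X N Z)
    (hX : ∀ j, AbsolutelyContinuousOnInterval (fun r => X r j) 0 N) (hn : 1 ≤ n)
    (w : ℕ → Fin d) :
    deriv (Z (n + 1) w) =ᵐ[volume.restrict (Ι 0 (N : ℝ))]
      fun t => deriv (fun r => X r (w 0)) t * Z n (fun i => w (i + 1)) t :=
  deriv_ae_eq_of_eq_integral
    (hZ.intervalIntegrable_mul hX hn (hX (w 0)).intervalIntegrable_deriv _)
    (by simpa only [uIcc_of_le N.cast_nonneg] using hZ.succ n hn w)

lemma integral_deriv_sigCoeff_succ_mul (hZ : IsSawtoothSignature X N Z)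
    (hX : ∀ j, AbsolutelyContinuousOnInterval (fun r => X r j) 0 N) (hn : 1 ≤ n) (m : ℕ)
    (w : ℕ → Fin d) :
    ∫ t in (0 : ℝ)..N, deriv (fun r => sigCoeff X 0 r (m + 1) w) t * Z n (fun i => w (m + 1 + i)) t
      = sigCoeff X 0 N m w * Z (n + 1) (fun i => w (m + i)) N -
        ∫ t in (0 : ℝ)..N,
          deriv (fun r => sigCoeff X 0 r m w) t * Z (n + 1) (fun i => w (m + i)) t := by
  have hparts := (absolutelyContinuousOnInterval_sigCoeff hX N.cast_nonneg m w
    ).integral_mul_deriv_eq_deriv_mul (hZ.absolutelyContinuousOnInterval_succ hX hn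
      fun i => w (m + i))
  rw [hZ.succ_apply_zero hn, mul_zero, sub_zero] at hparts
  rw [← hparts]
  refine integral_congr_ae_restrict ?_
  filter_upwards [deriv_sigCoeff_succ_ae_eq hX N.cast_nonneg m w,
    hZ.deriv_succ_ae_eq hX hn fun i => w (m + i)] with t hS hZ'
  rw [hS, hZ', mul_assoc]
  simp only [add_zero, add_assoc, add_comm 1]

lemma integral_deriv_sigCoeff_mul_eq_sum (hZ : IsSawtoothSignature X N Z)
    (hX : ∀ j, AbsolutelyContinuousOnInterval (fun r => X r j) 0 N) (hn : 1 ≤ n) (m : ℕ)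
    (w : ℕ → Fin d) :
    ∫ t in (0 : ℝ)..N, deriv (fun r => sigCoeff X 0 r m w) t * Z n (fun i => w (m + i)) t =
      ∑ q ∈ Finset.range m, (-1) ^ q * sigCoeff X 0 N (m - (q + 1)) w *
        Z (n + 1 + q) (fun i => w (m - (q + 1) + i)) N := by
  induction m generalizing n with
  | zero => simp [sigCoeff_zero]
  | succ m ih =>
    rw [hZ.integral_deriv_sigCoeff_succ_mul hX hn, ih (by omega), Finset.sum_range_succ',
      sub_eq_neg_add, ← Finset.sum_neg_distrib]
    have hlength (q : ℕ) : n + 1 + 1 + q = n + 1 + (q + 1) := by omega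
    simp only [hlength, pow_succ, pow_zero, mul_neg_one, one_mul, neg_mul,
      Nat.add_sub_add_right, Nat.add_sub_cancel, add_zero, zero_add]

end IsSawtoothSignature

theorem signature_sawtooth_recursion_general {d N : ℕ} {X : ℝ → Fin d → ℝ}
    (hX : ∀ j, AbsolutelyContinuousOnInterval (fun r => X r j) 0 N)
    {Z : ℕ → (ℕ → Fin d) → ℝ → ℝ} (hZ : IsSawtoothSignature X N Z)
    {l : ℕ} (hl : 1 ≤ l) (w : ℕ → Fin d) :
    sigCoeff X 0 N l w =
      (∑ k ∈ Finset.range N, sigCoeff X 0 k (l - 1) w * (X (k + 1) (w (l - 1)) - X k (w (l - 1))))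
      + ∑ p ∈ Finset.Icc 2 l,
          (-1) ^ (p + 1) * sigCoeff X 0 N (l - p) w * Z p (fun i => w (l - p + i)) N := by
  obtain ⟨m, rfl⟩ := Nat.exists_eq_add_of_le' hl
  have hby_parts := integral_mul_deriv_eq_sum_sub_integral_backwardSawtooth
    (absolutelyContinuousOnInterval_sigCoeff hX N.cast_nonneg m w) (hX (w m))
  have hsawtooth : ∫ t in (0 : ℝ)..N, deriv (fun r => sigCoeff X 0 r m w) t *
      backwardSawtooth (fun r => X r (w m)) t =
        ∑ q ∈ Finset.range m, (-1) ^ q * sigCoeff X 0 N (m - (q + 1)) w *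
          Z (1 + 1 + q) (fun i => w (m - (q + 1) + i)) N :=
    (hZ.integral_mul_one _ fun i => w (m + i)).symm.trans
      (hZ.integral_deriv_sigCoeff_mul_eq_sum hX le_rfl m w)
  rw [sigCoeff_succ_of_mem hX N.cast_nonneg m w right_mem_uIcc, hby_parts, hsawtooth,
    Nat.add_sub_cancel, sub_eq_add_neg, ← Finset.sum_neg_distrib,
    ← Finset.Ico_succ_right_eq_Icc, Finset.sum_Ico_eq_sum_range]
  congr 1
  refine Finset.sum_congr (by simp) fun q _ => ?_
  rw [show m + 1 - (2 + q) = m - (q + 1) by omega]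
  ring

/-- Recursion for the signature of a path in terms of discrete Riemann–Stieltjes sums
and the backward sawtooth signature coefficients `Z` (with unit initial datum). -/
theorem signature_sawtooth_recursion {d : ℕ} (N : ℕ) (hN : 1 ≤ N)
    (X : ℝ → Fin d → ℝ)
    (hXdiff : ∀ j, ContDiffOn ℝ 1 (fun r => X r j) (Set.Icc 0 (N : ℝ)))
    (hX0 : ∀ u : ℝ, u ≤ 0 → X u = X 0)
    (hXN : ∀ u : ℝ, (N : ℝ) ≤ u → X u = X (N : ℝ))
    (Z : ℕ → (ℕ → Fin d) → ℝ → ℝ)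
    (hZ1 : ∀ (w : ℕ → Fin d) (t : ℝ),
      Z 1 w t = X t (w 0) - X ((⌊t⌋ : ℝ) + 1) (w 0))
    (hZrec : ∀ n, 2 ≤ n → ∀ (w : ℕ → Fin d) (t : ℝ),
      Z n w t = ∫ s in (0:ℝ)..t,
        deriv (fun r => X r (w 0)) s * Z (n - 1) (fun i => w (i + 1)) s)
    (l : ℕ) (hl : 2 ≤ l) (w : ℕ → Fin d) :
    sigCoeff X 0 (N : ℝ) l w =
      (∑ k ∈ Finset.range N,
        sigCoeff X 0 (k : ℝ) (l - 1) w *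
          (X ((k : ℝ) + 1) (w (l - 1)) - X (k : ℝ) (w (l - 1))))
      + ∑ p ∈ Finset.Icc 2 l,
          (-1 : ℝ) ^ (p + 1) * sigCoeff X 0 (N : ℝ) (l - p) w *
            Z p (fun i => w (l - p + i)) (N : ℝ) :=
  signature_sawtooth_recursion_general
    (fun j => ContDiffOn.absolutelyContinuousOnInterval
      (by simpa only [uIcc_of_le N.cast_nonneg] using hXdiff j))
    ⟨fun w t _ => hZ1 w t, fun n hn w t _ => hZrec (n + 1) (by omega) w t⟩ (by omega) w
end
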